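/- arXiv:2412.01367 — 2 statements merged into one kernel-verified Lean document; each statement's English description precedes it below -/
import Mathlib

section
/- Let M be an r×r real positive definite matrix (hM : M.PosDef) that is irreducible. Then M⁻¹ is positive definite and its positive semidefinite square root (hM.inv.posSemidef.sqrt) is irreducible. (Step in the proof of Theorem 1 with β = 1/2: if the conditional Fisher information 𝓘 is not block diagonal, then 𝓘^{-1/2} is not block diagonal.) -/
/-- A matrix is irreducible (not block diagonal under any simultaneous permutation of
rows and columns) if for every nonempty proper subset `S` of indices there are
`i ∈ S` and `j ∉ S` with `M i j ≠ 0`. -/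
def MatrixIrreducible {r : ℕ} (M : Matrix (Fin r) (Fin r) ℝ) : Prop :=
  ∀ S : Finset (Fin r), S.Nonempty → S ≠ Finset.univ →
    ∃ i ∈ S, ∃ j ∉ S, M i j ≠ 0

open scoped MatrixOrder

/-!
For an index set `S`, the matrices whose entries vanish on `S × Sᶜ` are block triangular for the
two-block partition `{Sᶜ, S}`, and block triangularity passes to powers and to inverses. Hence
a set `S` witnessing that `√(M⁻¹)` is reducible also does so for `(√(M⁻¹))² = M⁻¹`, and then for
`(M⁻¹)⁻¹ = M`.
-/

/-- Irreducibility of a square matrix over an arbitrary index type and coefficient type: no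
nonempty proper index set `S` has all entries on `S × Sᶜ` equal to zero. For real matrices indexed
by `Fin r` it is definitionally `MatrixIrreducible`; unlike `Matrix.IsIrreducible`, it allows
negative entries. -/
def BlockIrreducible {n R : Type*} [Fintype n] [Zero R] (M : Matrix n n R) : Prop :=
  ∀ S : Finset n, S.Nonempty → S ≠ Finset.univ → ∃ i ∈ S, ∃ j ∉ S, M i j ≠ 0

-- `Prop` is ordered by implication, so `False < True` puts the block `Sᶜ` before the block `S`.
theorem blockTriangular_mem_iff {n R : Type*} [Zero R] {M : Matrix n n R} {S : Finset n} :
    M.BlockTriangular (· ∈ S) ↔ ∀ i ∈ S, ∀ j ∉ S, M i j = 0 := by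
  simp only [Matrix.BlockTriangular, lt_iff_le_not_ge, le_Prop_eq]
  grind

theorem blockTriangular_inv {n R α : Type*} [Fintype n] [DecidableEq n] [CommRing R]
    [LinearOrder α] {M : Matrix n n R} {b : n → α} (hM : M.BlockTriangular b) :
    M⁻¹.BlockTriangular b := by
  by_cases hdet : IsUnit M.det
  · let := M.invertibleOfIsUnitDet hdet
    exact Matrix.blockTriangular_inv_of_blockTriangular hM
  · rw [Matrix.nonsing_inv_apply_not_isUnit M hdet]
    exact Matrix.blockTriangular_zero

section BlockIrreducible

variable {n R : Type*} [Fintype n]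

theorem blockIrreducible_iff_not_blockTriangular [Zero R] {M : Matrix n n R} :
    BlockIrreducible M ↔
      ∀ S : Finset n, S.Nonempty → S ≠ Finset.univ → ¬ M.BlockTriangular (· ∈ S) := by
  simp only [BlockIrreducible, blockTriangular_mem_iff, not_forall, exists_prop, ne_eq]

theorem BlockIrreducible.of_pow [DecidableEq n] [Semiring R] {M : Matrix n n R} {k : ℕ}
    (h : BlockIrreducible (M ^ k)) : BlockIrreducible M := by
  rw [blockIrreducible_iff_not_blockTriangular] at h ⊢
  exact fun S hS hS' hM => h S hS hS' (hM.pow k)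

theorem BlockIrreducible.of_inv [DecidableEq n] [CommRing R] {M : Matrix n n R}
    (h : BlockIrreducible M⁻¹) : BlockIrreducible M := by
  rw [blockIrreducible_iff_not_blockTriangular] at h ⊢
  exact fun S hS hS' hM => h S hS hS' (blockTriangular_inv hM)

end BlockIrreducible

open scoped ComplexOrder in
theorem stmt_7_general {n 𝕜 : Type*} [Fintype n] [DecidableEq n] [RCLike 𝕜] {M : Matrix n n 𝕜}
    (hM : M.PosDef) (hirr : BlockIrreducible M) :
    M⁻¹.PosDef ∧ BlockIrreducible (CFC.sqrt M⁻¹) := by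
  have sq_sqrt : CFC.sqrt M⁻¹ ^ 2 = M⁻¹ := CFC.sq_sqrt M⁻¹ hM.inv.posSemidef.nonneg
  have inv_inv_eq : M⁻¹⁻¹ = M := M.nonsing_inv_nonsing_inv hM.det_pos.ne'.isUnit
  have irreducible_inv : BlockIrreducible M⁻¹ := .of_inv (inv_inv_eq.symm ▸ hirr)
  exact ⟨hM.inv, .of_pow (sq_sqrt.symm ▸ irreducible_inv)⟩

/-- If `M` is positive definite and irreducible, then `M⁻¹` is positive definite and
its positive semidefinite square root is irreducible. -/
theorem stmt_7 (r : ℕ) (M : Matrix (Fin r) (Fin r) ℝ) (hM : M.PosDef)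
    (hirr : MatrixIrreducible M) :
    M⁻¹.PosDef ∧ MatrixIrreducible (CFC.sqrt M⁻¹) :=
  stmt_7_general hM hirr
end

section
/- (Proposition 1, case β = 1: form-invariance of the score-driven recursion.) Let T be an invertible r×r real matrix, c : Fin r → ℝ, A, B : Matrix (Fin r) (Fin r) ℝ, ∇̄ : ℕ → (Fin r → ℝ), and Ī : ℕ → Matrix (Fin r) (Fin r) ℝ with Ī k invertible for every k. Suppose f : ℕ → (Fin r → ℝ) satisfies, for all k, f (k+1) = c + A.mulVec ((((T⁻¹)ᵀ * Ī k * T⁻¹)⁻¹).mulVec ((T⁻¹)ᵀ.mulVec (∇̄ k))) + B.mulVec (f k). Then the transformed factors f̄ k := T⁻¹.mulVec (f k) satisfy, for all k, f̄ (k+1) = T⁻¹.mulVec c + (T⁻¹ * A * T).mulVec ((Ī k)⁻¹.mulVec (∇̄ k)) + (T⁻¹ * B * T).mulVec (f̄ k), i.e., the recursion with score scaled by the inverse conditional Fisher information keeps the same score-driven form under any non-singular linear transformation of the factors. -/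
open Matrix

section ScoreDriven

variable {n m p R : Type*} [Fintype n] [Fintype m]

/-- The score scaled by the inverse conditional Fisher information, `s = 𝓘⁻¹ ∇`. It is only
meaningful for invertible `info`, since `info⁻¹` is `0` otherwise. -/
noncomputable def scaledScore [DecidableEq n] [CommRing R] (info : Matrix n n R) (score : n → R) :
    n → R :=
  info⁻¹ *ᵥ score

/-- The factor recursion `f_{t+1} = c + A s_t + B f_t` driven by a sequence `s` of scaled scores.
The matrix `A` may be rectangular, so `s` need not have the dimension of `f`. -/
def IsScoreDriven [NonUnitalNonAssocSemiring R] (c : n → R) (A : Matrix n m R) (B : Matrix n n R)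
    (s : ℕ → m → R) (f : ℕ → n → R) : Prop :=
  ∀ k, f (k + 1) = c + A *ᵥ s k + B *ᵥ f k

theorem inv_mul_mul_mul_cancel_left [DecidableEq n] [CommRing R] {Q : Matrix n n R}
    (hQ : IsUnit Q.det) (J P : Matrix n n R) : (Q * J * P)⁻¹ * Q = P⁻¹ * J⁻¹ := by
  rw [Matrix.mul_inv_rev, Matrix.mul_inv_rev, ← Matrix.mul_assoc,
    nonsing_inv_mul_cancel_right _ _ hQ]

/-- The gradient `∇` is covariant; scaling it by `𝓘⁻¹` makes it contravariant like the factors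
`f = T f̄`, which is why `A` and `B` end up conjugated by the same `T`. -/
theorem scaledScore_change_of_factors [DecidableEq n] [CommRing R] {T : Matrix n n R}
    (hT : IsUnit T.det) (info : Matrix n n R) (score : n → R) :
    scaledScore ((T⁻¹)ᵀ * info * T⁻¹) ((T⁻¹)ᵀ *ᵥ score) = T *ᵥ scaledScore info score := by
  have hTinv : IsUnit ((T⁻¹)ᵀ).det := isUnit_det_transpose _ (isUnit_nonsing_inv_det T hT)
  simp only [scaledScore, mulVec_mulVec, inv_mul_mul_mul_cancel_left hTinv,
    nonsing_inv_nonsing_inv T hT]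

theorem IsScoreDriven.inv_mulVec [DecidableEq n] [Fintype p] [CommRing R] {T : Matrix n n R}
    (hT : IsUnit T.det) {c : n → R} {A : Matrix n m R} {B : Matrix n n R} {S : Matrix m p R}
    {s : ℕ → p → R} {f : ℕ → n → R} (hf : IsScoreDriven c A B (fun k => S *ᵥ s k) f) :
    IsScoreDriven (T⁻¹ *ᵥ c) (T⁻¹ * A * S) (T⁻¹ * B * T) s (fun k => T⁻¹ *ᵥ f k) := by
  intro k
  calc T⁻¹ *ᵥ f (k + 1)
      = T⁻¹ *ᵥ (c + A *ᵥ (S *ᵥ s k) + B *ᵥ f k) := by rw [hf k]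
    _ = T⁻¹ *ᵥ c + (T⁻¹ * A * S) *ᵥ s k + (T⁻¹ * B) *ᵥ f k := by
        simp only [mulVec_add, mulVec_mulVec, Matrix.mul_assoc]
    _ = T⁻¹ *ᵥ c + (T⁻¹ * A * S) *ᵥ s k + (T⁻¹ * B * T) *ᵥ (T⁻¹ *ᵥ f k) := by
        rw [mulVec_mulVec, mul_nonsing_inv_cancel_right _ _ hT]

theorem stmt_15_general [DecidableEq n] [CommRing R] {T : Matrix n n R} (hT : IsUnit T.det)
    {c : n → R} {A B : Matrix n n R} {score : ℕ → n → R} {Ibar : ℕ → Matrix n n R}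
    (_hIbar : ∀ k, IsUnit (Ibar k).det) {f : ℕ → n → R}
    (hf : IsScoreDriven c A B
      (fun k => scaledScore ((T⁻¹)ᵀ * Ibar k * T⁻¹) ((T⁻¹)ᵀ *ᵥ score k)) f) :
    IsScoreDriven (T⁻¹ *ᵥ c) (T⁻¹ * A * T) (T⁻¹ * B * T)
      (fun k => scaledScore (Ibar k) (score k)) (fun k => T⁻¹ *ᵥ f k) := by
  simp only [scaledScore_change_of_factors hT] at hf
  exact hf.inv_mulVec hT

end ScoreDriven

/-- Proposition 1, case `β = 1`: the score-driven recursion with score scaled by the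
inverse conditional Fisher information keeps the same score-driven form under any
non-singular linear transformation `T` of the factors. -/
theorem stmt_15 (r : ℕ) (T : Matrix (Fin r) (Fin r) ℝ) (hT : IsUnit T.det)
    (c : Fin r → ℝ) (A B : Matrix (Fin r) (Fin r) ℝ)
    (score : ℕ → (Fin r → ℝ)) (Ibar : ℕ → Matrix (Fin r) (Fin r) ℝ)
    (hIbar : ∀ k, IsUnit (Ibar k).det)
    (f : ℕ → (Fin r → ℝ))
    (hrec : ∀ k, f (k + 1) =
      c + A.mulVec ((((T⁻¹)ᵀ * Ibar k * T⁻¹)⁻¹).mulVec ((T⁻¹)ᵀ.mulVec (score k)))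
        + B.mulVec (f k)) :
    ∀ k, T⁻¹.mulVec (f (k + 1)) =
      T⁻¹.mulVec c + (T⁻¹ * A * T).mulVec ((Ibar k)⁻¹.mulVec (score k))
        + (T⁻¹ * B * T).mulVec (T⁻¹.mulVec (f k)) :=
  stmt_15_general hT hIbar hrec
end
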